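/- arXiv:1807.09145 — 2 statements merged into one kernel-verified Lean document; each statement's English description precedes it below -/
import Mathlib

section
/- The set {(v, a) ∈ ℂ × Circle : a • conj v = v} (the set of rotations of the Euclidean plane around centers lying on a fixed line, together with the translations in the orthogonal direction, i.e. rotations with infinite center), equipped with the subspace topology of ℂ × Circle, is homeomorphic to the open Möbius strip. -/
/-!
If `u` is a square root of `a ∈ Circle`, the equation `a • conj v = v` says that `v * conj u` is
real, so the fibre over `a` is the real line spanned by `u`. Hence the fixed-point set is
parametrized by `mobiusParam : (x, y) ↦ (y e^{iπx}, e^{2πix})`, and replacing `x` by `x + 1` changes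
the sign of the chosen square root, so two points have the same image exactly when they are related
by a power of `(x, y) ↦ (x + 1, -y)` (`mobiusParam_eq_of_rel`, `mobius_mk_eq_of_param_eq`).

The induced continuous bijection from the Möbius strip is a homeomorphism because `mobiusParam` is a
quotient map: its restriction to `[-1, 1] × ℝ` is onto (`exists_mobiusParam_eq`) and proper
(`isProperMap_mobiusParam_strip`), hence closed.
-/

/-- The generating relation of the Möbius strip: `(x, y) ∼ (x + 1, -y)`. -/
def mobiusRel (p q : ℝ × ℝ) : Prop := q = (p.1 + 1, -p.2)

/-- The open Möbius strip: the quotient of `ℝ × ℝ` by the equivalence relation generated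
by `(x, y) ∼ (x + 1, -y)`, with the quotient topology. -/
def MobiusStrip : Type := Quot mobiusRel

instance : TopologicalSpace MobiusStrip :=
  inferInstanceAs (TopologicalSpace (Quot mobiusRel))

/-- Real multiples of a square root `u` of `a = u * u` satisfy `a • conj v = v`. -/
lemma mobius_param_mem (u : Circle) (y : ℝ) :
    (u * u) • (starRingEnd ℂ) ((y : ℂ) * u) = (y : ℂ) * u := by
  have h : (u : ℂ) * (starRingEnd ℂ) (u : ℂ) = 1 := by
    rw [Complex.mul_conj, Circle.normSq_coe, Complex.ofReal_one]
  rw [Circle.smul_def, smul_eq_mul, map_mul, Complex.conj_ofReal, Circle.coe_mul]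
  linear_combination (y * u : ℂ) * h

/-- The double-angle parametrization `(x, y) ↦ (y e^{iπx}, e^{2πix})` of the fixed-point set
by the plane. -/
noncomputable def mobiusParam (p : ℝ × ℝ) :
    {x : ℂ × Circle // x.2 • (starRingEnd ℂ) x.1 = x.1} :=
  ⟨((p.2 : ℂ) * Circle.exp (Real.pi * p.1),
    Circle.exp (Real.pi * p.1) * Circle.exp (Real.pi * p.1)), mobius_param_mem _ _⟩

lemma continuous_mobiusParam : Continuous mobiusParam := by
  unfold mobiusParam
  fun_prop

lemma mobiusParam_eq_of_rel (p q : ℝ × ℝ) (h : mobiusRel p q) :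
    mobiusParam p = mobiusParam q := by
  subst h
  have h : Circle.exp (Real.pi * (p.1 + 1)) = Circle.exp (Real.pi * p.1) * Circle.exp Real.pi := by
    rw [mul_add, mul_one, Circle.exp_add]
  have h1 : ((Circle.exp Real.pi : Circle) : ℂ) = -1 := by
    rw [Circle.coe_exp, Complex.exp_pi_mul_I]
  apply Subtype.ext
  apply Prod.ext
  · simp [mobiusParam, h, h1]
  · apply Circle.ext
    simp [mobiusParam, h, h1]

/-- Iterating the generating relation `n` times, in either direction. -/
lemma mobius_mk_shift (n : ℤ) (x y : ℝ) :
    Quot.mk mobiusRel (x + n, (-1 : ℝ) ^ n * y) = Quot.mk mobiusRel (x, y) := by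
  have hs : (-1 : ℝ) ≠ 0 := by norm_num
  have key : ∀ m : ℤ, Quot.mk mobiusRel (x + (m + 1 : ℤ), (-1 : ℝ) ^ (m + 1) * y) =
      Quot.mk mobiusRel (x + m, (-1 : ℝ) ^ m * y) := fun m => by
    refine (Quot.sound ?_).symm
    unfold mobiusRel
    rw [zpow_add_one₀ hs]
    push_cast
    ext <;> simp only <;> ring
  induction n using Int.induction_on with
  | zero => simp
  | succ k ih => rw [key, ih]
  | pred k ih => rw [← ih, ← key, sub_add_cancel]

lemma mobius_mk_eq_of_param_eq (p q : ℝ × ℝ) (h : mobiusParam p = mobiusParam q) :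
    Quot.mk mobiusRel p = Quot.mk mobiusRel q := by
  obtain ⟨x, y⟩ := p
  obtain ⟨x', y'⟩ := q
  have h2 : Circle.exp (Real.pi * x + Real.pi * x) = Circle.exp (Real.pi * x' + Real.pi * x') := by
    rw [Circle.exp_add, Circle.exp_add]
    exact congrArg (fun z => z.1.2) h
  obtain ⟨n, hn⟩ := Circle.exp_eq_exp.1 h2
  have hx : x = x' + n := by
    have := Real.pi_ne_zero
    apply mul_left_cancel₀ this
    linarith
  have hshift := mobius_mk_shift n x' y'
  have h3 : mobiusParam (x' + n, (-1 : ℝ) ^ n * y') = mobiusParam (x', y') :=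
    congrArg (Quot.lift mobiusParam mobiusParam_eq_of_rel) hshift
  rw [← h3, hx] at h
  -- Both first components are real multiples of the same nonzero complex number.
  have h4 := congrArg (fun z => z.1.1) h
  have h5 : (y : ℂ) = (((-1 : ℝ) ^ n * y' : ℝ) : ℂ) :=
    mul_right_cancel₀ (Circle.coe_ne_zero _) h4
  rw [← hshift, hx, Complex.ofReal_injective h5]

/-- The values `x ∈ [-1, 1]` already exhaust the fixed-point set. -/
lemma exists_mobiusParam_eq (z : {x : ℂ × Circle // x.2 • (starRingEnd ℂ) x.1 = x.1}) :
    ∃ p : Set.Icc (-1 : ℝ) 1 × ℝ, mobiusParam (p.1, p.2) = z := by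
  obtain ⟨⟨v, a⟩, hz⟩ := z
  have hpi := Real.pi_pos
  set t : ℝ := Complex.arg a / (2 * Real.pi) with ht
  have h1 : -1 ≤ t := by
    rw [ht, le_div_iff₀ (by positivity)]
    linarith [Complex.neg_pi_lt_arg (a : ℂ)]
  have h2 : t ≤ 1 := by
    rw [ht, div_le_iff₀ (by positivity)]
    linarith [Complex.arg_le_pi (a : ℂ)]
  set u : Circle := Circle.exp (Real.pi * t) with hu
  have hua : u * u = a := by
    rw [hu, ← Circle.exp_add, ← Circle.exp_arg a]
    congr 1
    rw [ht]
    field_simp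
    ring
  have huc : (u : ℂ) * (starRingEnd ℂ) (u : ℂ) = 1 := by
    rw [Complex.mul_conj, Circle.normSq_coe, Complex.ofReal_one]
  -- `v * conj u` is fixed by conjugation, hence real; its value is the second coordinate.
  have hreal : (starRingEnd ℂ) (v * (starRingEnd ℂ) (u : ℂ)) = v * (starRingEnd ℂ) (u : ℂ) := by
    simp only [← hua, Circle.smul_def, smul_eq_mul, Circle.coe_mul] at hz
    rw [map_mul, Complex.conj_conj]
    linear_combination (starRingEnd ℂ) (u : ℂ) * hz - (starRingEnd ℂ) v * u * huc
  obtain ⟨y, hy⟩ := Complex.conj_eq_iff_real.1 hreal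
  refine ⟨(⟨t, h1, h2⟩, y), Subtype.ext (Prod.ext ?_ hua)⟩
  change (y : ℂ) * (u : ℂ) = v
  rw [← hy]
  linear_combination v * huc

/-- On the strip `[-1, 1] × ℝ` the parametrization is proper, because the modulus of the
first component of `(y e^{iπx}, e^{2πix})` is `|y|`. -/
lemma isProperMap_mobiusParam_strip :
    IsProperMap (fun p : Set.Icc (-1 : ℝ) 1 × ℝ => mobiusParam (p.1, p.2)) := by
  have hcl : IsClosed {x : ℂ × Circle | x.2 • (starRingEnd ℂ) x.1 = x.1} :=
    isClosed_eq (by simp only [Circle.smul_def]; fun_prop) continuous_fst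
  have : LocallyCompactSpace {x : ℂ × Circle // x.2 • (starRingEnd ℂ) x.1 = x.1} :=
    hcl.isClosedEmbedding_subtypeVal.locallyCompactSpace
  have hcont : Continuous (fun p : Set.Icc (-1 : ℝ) 1 × ℝ => mobiusParam (p.1, p.2)) :=
    continuous_mobiusParam.comp (by fun_prop)
  refine isProperMap_iff_isCompact_preimage.2 ⟨hcont, fun K hK => ?_⟩
  have hnorm : Continuous (fun z : {x : ℂ × Circle // x.2 • (starRingEnd ℂ) x.1 = x.1} =>
      ‖z.1.1‖) := by fun_prop
  obtain ⟨R, hR⟩ := (hK.image hnorm).bddAbove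
  refine (isCompact_univ.prod (isCompact_Icc (a := -R) (b := R))).of_isClosed_subset
    (hK.isClosed.preimage hcont) fun p hp => ⟨Set.mem_univ _, ?_⟩
  have := hR ⟨_, hp, rfl⟩
  simp only [mobiusParam, norm_mul, Circle.norm_coe, mul_one, Complex.norm_real,
    Real.norm_eq_abs] at this
  exact abs_le.1 this

lemma isQuotientMap_mobiusParam : Topology.IsQuotientMap mobiusParam := by
  have hsurj : Function.Surjective
      (fun p : Set.Icc (-1 : ℝ) 1 × ℝ => mobiusParam (p.1, p.2)) := exists_mobiusParam_eq
  have hp := isProperMap_mobiusParam_strip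
  exact Topology.IsQuotientMap.of_comp
    (f := fun p : Set.Icc (-1 : ℝ) 1 × ℝ => ((p.1 : ℝ), p.2)) (by fun_prop)
    continuous_mobiusParam (hp.isClosedMap.isQuotientMap hp.continuous hsurj)

/-- The set of fixed points `{(v, a) : a • conj v = v}` of the
anti-automorphism `T (v, a) = (a • conj v, a)` of `SE(2) = ℂ × Circle` (the rotations
around centers on a fixed line together with the orthogonal translations), with the
subspace topology, is homeomorphic to the open Möbius strip. -/
theorem se2_fixed_point_set_homeomorphic_mobius :
    Nonempty ({x : ℂ × Circle // x.2 • (starRingEnd ℂ) x.1 = x.1} ≃ₜ MobiusStrip) := by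
  let F : MobiusStrip → {x : ℂ × Circle // x.2 • (starRingEnd ℂ) x.1 = x.1} :=
    Quot.lift mobiusParam mobiusParam_eq_of_rel
  have hF : Continuous F := continuous_quot_lift _ continuous_mobiusParam
  have hbij : Function.Bijective F := by
    constructor
    · rintro ⟨p⟩ ⟨q⟩ h
      exact mobius_mk_eq_of_param_eq p q h
    · intro z
      obtain ⟨p, hp⟩ := isQuotientMap_mobiusParam.surjective z
      exact ⟨Quot.mk _ p, hp⟩
  let e := Equiv.ofBijective F hbij
  refine ⟨Homeomorph.symm ⟨e, hF, ?_⟩⟩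
  refine isQuotientMap_mobiusParam.continuous_iff.2 ?_
  have : e.symm ∘ mobiusParam = (Quot.mk mobiusRel : ℝ × ℝ → MobiusStrip) :=
    funext fun p => e.symm_apply_apply (Quot.mk mobiusRel p)
  change Continuous (e.symm ∘ mobiusParam)
  rw [this]
  exact continuous_quot_mk
end

section
/- For every point q of the real projective plane ℝP², the complement ℝP² \ {q}, with the subspace topology, is homeomorphic to the open Möbius strip. -/
/-- The real projective plane `ℝP²`, the projectivization of `ℝ³` with the quotient
topology induced from `ℝ³ \ {0}`. -/
abbrev RealProjectivePlane : Type := Projectivization ℝ (Fin 3 → ℝ)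

instance : TopologicalSpace RealProjectivePlane :=
  inferInstanceAs (TopologicalSpace (Quotient (projectivizationSetoid ℝ (Fin 3 → ℝ))))

theorem isOpenQuotientMap_projectivization_mk' :
    IsOpenQuotientMap (Projectivization.mk' ℝ : {v : Fin 3 → ℝ // v ≠ 0} → RealProjectivePlane) := by
  have hq : Topology.IsQuotientMap
      (Projectivization.mk' ℝ : {v : Fin 3 → ℝ // v ≠ 0} → RealProjectivePlane) :=
    isQuotientMap_quot_mk
  refine ⟨hq.surjective, hq.continuous, fun U hU => ?_⟩
  rw [← hq.isOpen_preimage]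
  -- The saturation of `U` is the union of its preimages under all scalings.
  let s : ℝˣ → {v : Fin 3 → ℝ // v ≠ 0} → {v : Fin 3 → ℝ // v ≠ 0} :=
    fun t v => ⟨t • v.1, (smul_ne_zero_iff_ne t).2 v.2⟩
  have hs : ∀ t, Continuous (s t) := fun t => by
    refine Continuous.subtype_mk ?_ _
    exact continuous_subtype_val.const_smul t
  have : (Projectivization.mk' ℝ ⁻¹' (Projectivization.mk' ℝ '' U) :
      Set {v : Fin 3 → ℝ // v ≠ 0}) = ⋃ t, s t ⁻¹' U := by
    ext v
    simp only [Set.mem_preimage, Set.mem_image, Set.mem_iUnion, Projectivization.mk'_eq_mk,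
      Projectivization.mk_eq_mk_iff]
    constructor
    · rintro ⟨u, hu, t, ht⟩
      refine ⟨t, ?_⟩
      have : s t v = u := Subtype.ext ht
      rwa [this]
    · rintro ⟨t, ht⟩
      exact ⟨s t v, ht, t, rfl⟩
  rw [this]
  exact isOpen_iUnion fun t => hU.preimage (hs t)

/-- The class of `(x, y)` in the Möbius strip. -/
def mobiusMk (x y : ℝ) : MobiusStrip := Quot.mk mobiusRel (x, y)

theorem continuous_mobiusMk : Continuous fun p : ℝ × ℝ => mobiusMk p.1 p.2 :=
  continuous_quot_mk

theorem mobiusMk_add_one (x y : ℝ) : mobiusMk (x + 1) (-y) = mobiusMk x y :=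
  (Quot.sound (show mobiusRel (x, y) (x + 1, -y) from rfl)).symm

theorem mobiusMk_add_two_nat (n : ℕ) (x y : ℝ) : mobiusMk (x + 2 * n) y = mobiusMk x y := by
  induction n with
  | zero => simp
  | succ k ih =>
    have h := mobiusMk_add_one (x + 2 * k + 1) (-y)
    rw [neg_neg, mobiusMk_add_one] at h
    rw [← ih, ← h]
    congr 1
    push_cast
    ring

theorem mobiusMk_add_two_int (n : ℤ) (x y : ℝ) : mobiusMk (x + 2 * n) y = mobiusMk x y := by
  obtain ⟨k, rfl | rfl⟩ := n.eq_nat_or_neg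
  · exact_mod_cast mobiusMk_add_two_nat k x y
  · rw [← mobiusMk_add_two_nat k]
    congr 1
    push_cast
    ring

/-- The point of the Möbius strip attached to the line through `(z, γ)`, for `z ≠ 0`:
writing `z = ‖z‖ exp (π x I)`, it is the class of `(x, γ / ‖z‖)`. Its value at `z = 0` is junk. -/
noncomputable def mobiusCoord (v : ℂ × ℝ) : MobiusStrip :=
  mobiusMk (v.1.arg / Real.pi) (v.2 / ‖v.1‖)

theorem mobiusCoord_polar_of_pos (r x y : ℝ) (hr : 0 < r) :
    mobiusCoord (r * Complex.exp (Real.pi * x * Complex.I), r * y) = mobiusMk x y := by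
  set z : ℂ := r * Complex.exp (Real.pi * x * Complex.I) with hz
  have hn : ‖z‖ = r := by
    rw [hz, norm_mul, ← Complex.ofReal_mul, Complex.norm_exp_ofReal_mul_I, mul_one,
      Complex.norm_real, Real.norm_of_nonneg hr.le]
  have h1 := Complex.norm_mul_exp_arg_mul_I z
  rw [hn] at h1
  have h2 : Complex.exp (z.arg * Complex.I) = Complex.exp (Real.pi * x * Complex.I) :=
    mul_left_cancel₀ (Complex.ofReal_ne_zero.2 hr.ne') (h1.trans hz)
  obtain ⟨n, h3⟩ := Complex.exp_eq_exp_iff_exists_int.1 h2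
  have h4 : z.arg = Real.pi * x + n * (2 * Real.pi) := by
    have := congrArg Complex.im h3
    simpa using this
  have h5 : z.arg / Real.pi = x + 2 * n := by
    rw [h4]
    field_simp
  simp only [mobiusCoord]
  rw [h5, hn, mul_div_cancel_left₀ _ hr.ne', mobiusMk_add_two_int]

theorem mobiusCoord_polar (r x y : ℝ) (hr : r ≠ 0) :
    mobiusCoord (r * Complex.exp (Real.pi * x * Complex.I), r * y) = mobiusMk x y := by
  rcases hr.lt_or_gt with h | h
  -- For `r < 0`, absorb the sign by replacing `(x, y)` with `(x + 1, -y)`.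
  · rw [← mobiusMk_add_one, ← mobiusCoord_polar_of_pos (-r) _ _ (neg_pos.2 h)]
    have : Complex.exp (Real.pi * ((x + 1 : ℝ) : ℂ) * Complex.I)
        = -Complex.exp (Real.pi * x * Complex.I) := by
      push_cast
      rw [mul_add, add_mul, Complex.exp_add, mul_one, Complex.exp_pi_mul_I, mul_neg_one]
    rw [this]
    simp
  · exact mobiusCoord_polar_of_pos r x y h

theorem eq_polar (v : ℂ × ℝ) (hv : v.1 ≠ 0) :
    v = (((‖v.1‖ : ℝ) : ℂ) * Complex.exp (Real.pi * ((v.1.arg / Real.pi : ℝ) : ℂ) * Complex.I),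
      ‖v.1‖ * (v.2 / ‖v.1‖)) := by
  have hn : ‖v.1‖ ≠ 0 := norm_ne_zero_iff.2 hv
  refine Prod.ext ?_ ?_
  · have : (Real.pi : ℂ) * ((v.1.arg / Real.pi : ℝ) : ℂ) = v.1.arg := by
      rw [← Complex.ofReal_mul, mul_div_cancel₀ _ Real.pi_ne_zero]
    simp only [this, Complex.norm_mul_exp_arg_mul_I]
  · simp only
    field_simp

theorem mobiusCoord_smul (t : ℝ) (ht : t ≠ 0) (v : ℂ × ℝ) (hv : v.1 ≠ 0) :
    mobiusCoord (t • v) = mobiusCoord v := by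
  have hn : ‖v.1‖ ≠ 0 := norm_ne_zero_iff.2 hv
  have h := mobiusCoord_polar (t * ‖v.1‖) (v.1.arg / Real.pi) (v.2 / ‖v.1‖) (mul_ne_zero ht hn)
  rw [show mobiusCoord v = mobiusMk (v.1.arg / Real.pi) (v.2 / ‖v.1‖) from rfl, ← h]
  conv_lhs => rw [eq_polar v hv]
  congr 1
  refine Prod.ext ?_ ?_
  · simp [mul_assoc]
  · simp [mul_assoc]

theorem continuousAt_mobiusCoord (v : ℂ × ℝ) (hv : v.1 ≠ 0) : ContinuousAt mobiusCoord v := by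
  have key : ∀ w : ℂ × ℝ, w.1 ∈ Complex.slitPlane → ContinuousAt mobiusCoord w := by
    intro w hw
    have hw0 : ‖w.1‖ ≠ 0 := norm_ne_zero_iff.2 (Complex.slitPlane_ne_zero hw)
    have h1 : ContinuousAt (fun w : ℂ × ℝ => w.1.arg / Real.pi) w :=
      (ContinuousAt.comp (f := Prod.fst) (Complex.continuousAt_arg hw)
        continuousAt_fst).div_const _
    have h2 : ContinuousAt (fun w : ℂ × ℝ => w.2 / ‖w.1‖) w :=
      continuousAt_snd.div continuousAt_fst.norm hw0
    exact ContinuousAt.comp (f := fun w : ℂ × ℝ => (w.1.arg / Real.pi, w.2 / ‖w.1‖))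
      continuous_mobiusMk.continuousAt (h1.prodMk h2)
  by_cases h : v.1 ∈ Complex.slitPlane
  · exact key v h
  · have h' : (-v).1 ∈ Complex.slitPlane := by
      rw [Complex.mem_slitPlane_iff] at h ⊢
      push Not at h
      left
      have : v.1.re ≠ 0 := fun h0 => hv (Complex.ext h0 h.2)
      simpa using lt_of_le_of_ne h.1 this
    have hc : ContinuousAt (fun w => mobiusCoord (-w)) v :=
      ContinuousAt.comp (f := fun w : ℂ × ℝ => -w) (key (-v) h') continuous_neg.continuousAt
    refine hc.congr ?_
    filter_upwards [continuousAt_fst.eventually_ne hv] with w hw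
    simpa using mobiusCoord_smul (-1) (by norm_num) w hw

theorem exists_equiv_complex_prod_real (c : Fin 3 → ℝ) (hc : c ≠ 0) :
    ∃ E : (Fin 3 → ℝ) ≃L[ℝ] ℂ × ℝ, E c = (0, 1) := by
  let e : (Fin 3 → ℝ) ≃L[ℝ] ℂ × ℝ := ContinuousLinearEquiv.ofFinrankEq (by simp)
  obtain ⟨A, hA⟩ := SeparatingDual.exists_continuousLinearEquiv_apply_eq (R := ℝ) hc
    (y := e.symm (0, 1)) (by simp)
  exact ⟨A.trans e, by simp [hA]⟩

/-- For every point `q` of the real projective plane, the complement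
`ℝP² \ {q}` with the subspace topology is homeomorphic to the open Möbius strip. -/
theorem projective_plane_minus_point_homeomorphic_mobius (q : RealProjectivePlane) :
    Nonempty ((({q}ᶜ : Set RealProjectivePlane)) ≃ₜ MobiusStrip) := by
  induction q using Projectivization.ind with
  | h c hc =>
  obtain ⟨E, hE⟩ := exists_equiv_complex_prod_real c hc
  have hq : ∀ (v : Fin 3 → ℝ) (hv : v ≠ 0),
      Projectivization.mk ℝ v hv ≠ Projectivization.mk ℝ c hc ↔ (E v).1 ≠ 0 := by
    intro v hv
    rw [not_iff_not, Projectivization.mk_eq_mk_iff']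
    constructor
    · rintro ⟨a, rfl⟩
      simp [hE]
    · intro h
      refine ⟨(E v).2, E.injective ?_⟩
      rw [map_smul, hE]
      exact Prod.ext (by simp [h]) (by simp)
  let H : RealProjectivePlane → MobiusStrip := fun p => mobiusCoord (E p.rep)
  have hH : ∀ (v : Fin 3 → ℝ) (hv : v ≠ 0), (E v).1 ≠ 0 →
      H (Projectivization.mk ℝ v hv) = mobiusCoord (E v) := by
    intro v hv h
    obtain ⟨a, ha⟩ := Projectivization.exists_smul_eq_mk_rep ℝ v hv
    simp only [H]
    rw [← ha, Units.smul_def, map_smul, mobiusCoord_smul _ a.ne_zero _ h]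
  have hHc : ∀ p : RealProjectivePlane, p ≠ Projectivization.mk ℝ c hc → ContinuousAt H p := by
    intro p hp
    induction p using Projectivization.ind with
    | h v hv =>
    have hv1 := (hq v hv).1 hp
    have hE' : ContinuousAt (fun w : {v : Fin 3 → ℝ // v ≠ 0} => E w.1) ⟨v, hv⟩ :=
      (E.continuous.comp continuous_subtype_val).continuousAt
    refine (isOpenQuotientMap_projectivization_mk'.continuousAt_comp_iff
      (x := ⟨v, hv⟩)).1 ?_
    have h1 : ContinuousAt (fun w : {v : Fin 3 → ℝ // v ≠ 0} => mobiusCoord (E w.1)) ⟨v, hv⟩ :=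
      ContinuousAt.comp (f := fun w : {v : Fin 3 → ℝ // v ≠ 0} => E w.1)
        (continuousAt_mobiusCoord _ hv1) hE'
    refine h1.congr ?_
    filter_upwards [hE'.fst.eventually_ne hv1] with w hw
    exact (hH w.1 w.2 hw).symm
  -- The vector of the line `[exp (π x I) : y]` in the original coordinates.
  let G : ℝ × ℝ → (Fin 3 → ℝ) :=
    fun p => E.symm (Complex.exp (Real.pi * p.1 * Complex.I), p.2)
  have hEG : ∀ p, (E (G p)).1 ≠ 0 := fun p => by simp [G, Complex.exp_ne_zero]
  have hG0 : ∀ p, G p ≠ 0 := fun p h => hEG p (by simp [h])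
  have hGc : Continuous G := E.symm.continuous.comp (by fun_prop)
  let g : ℝ × ℝ → ({Projectivization.mk ℝ c hc}ᶜ : Set RealProjectivePlane) :=
    fun p => ⟨Projectivization.mk ℝ (G p) (hG0 p), (hq _ _).2 (hEG p)⟩
  have hgc : Continuous g := Continuous.subtype_mk
    (isOpenQuotientMap_projectivization_mk'.continuous.comp (hGc.subtype_mk hG0)) _
  have hg : ∀ p p', mobiusRel p p' → g p = g p' := by
    rintro p _ rfl
    refine Subtype.ext ((Projectivization.mk_eq_mk_iff' ℝ _ _ _ _).2 ⟨-1, ?_⟩)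
    simp only [G]
    rw [← map_smul]
    congr 1
    refine Prod.ext ?_ (by simp)
    simp [mul_add, add_mul, Complex.exp_add]
  refine ⟨{
    toFun := fun p => H p.1
    invFun := Quot.lift g hg
    left_inv := ?_
    right_inv := ?_
    continuous_toFun := ?_
    continuous_invFun := continuous_quot_lift hg hgc }⟩
  · rintro ⟨p, hp⟩
    induction p using Projectivization.ind with
    | h v hv =>
    have hv1 := (hq v hv).1 hp
    refine Subtype.ext ?_
    simp only
    rw [hH v hv hv1]
    refine (Projectivization.mk_eq_mk_iff' ℝ _ _ _ _).2 ⟨‖(E v).1‖⁻¹, ?_⟩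
    apply E.injective
    rw [map_smul, inv_smul_eq_iff₀ (norm_ne_zero_iff.2 hv1)]
    refine (eq_polar (E v) hv1).trans ?_
    simp only [G, E.apply_symm_apply]
    exact Prod.ext (by simp) (by simp)
  · rintro ⟨x, y⟩
    change H (Projectivization.mk ℝ (G (x, y)) _) = mobiusMk x y
    rw [hH _ _ (hEG _), ← mobiusCoord_polar 1 x y one_ne_zero]
    simp [G]
  · exact continuous_iff_continuousAt.2 fun p =>
      ContinuousAt.comp (f := Subtype.val) (hHc p.1 p.2) continuousAt_subtype_val
end
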